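/- Let R be a commutative semiring, V a type, and μ : V → V → R a matrix with zero diagonal whose support digraph (the relation x → y iff μ x y ≠ 0) is acyclic (its transitive closure is irreflexive). Then for all distinct v, w ∈ V, (μ↑v)↑w = (μ↑w)↑v, and moreover for every v ∈ V the support digraph of the detour μ↑v is acyclic. -/

import Mathlib

/-- The detour of a weighted digraph `μ` (a matrix with zero diagonal over a
commutative semiring) at a vertex `v`. -/
def wdetour {R V : Type*} [CommSemiring R] [DecidableEq V]
    (μ : V → V → R) (v : V) : V → V → R :=
  fun x y => if x = v ∨ y = v ∨ x = y then 0 else μ x y + μ x v * μ v y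

/-! Every arc of `μ↑v` comes from a walk of length one or two in `μ`, so a cycle of `μ↑v` unfolds
to a closed walk of `μ`. Both double detours at `v` and `w` sum the weights of the walks from `x` to
`y` with distinct inner vertices in `{v, w}`, except that `(μ↑v)↑w` also counts `x → v → w → v → y`
and `(μ↑w)↑v` counts `x → w → v → w → y`. These two walks run around the 2-cycle on `v` and `w`, so
they weigh `0` as soon as `μ v w * μ w v = 0`. -/

open Relation

/-- The support digraph of a weighted digraph `μ`, encoded as a relation on the vertices; acyclicity
is irreflexivity of its transitive closure. -/
abbrev WSupport {R V : Type*} [Zero R] (μ : V → V → R) : V → V → Prop :=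
  fun x y => μ x y ≠ 0

namespace WSupport

variable {R V : Type*} [MulZeroClass R] {μ : V → V → R}

theorem transGen_of_mul_ne_zero {x v y : V} (h : μ x v * μ v y ≠ 0) :
    TransGen (WSupport μ) x y :=
  .head (left_ne_zero_of_mul h) (.single (right_ne_zero_of_mul h))

theorem mul_swap_eq_zero (hμ : Std.Irrefl (TransGen (WSupport μ))) (v w : V) :
    μ v w * μ w v = 0 :=
  of_not_not fun h => hμ.irrefl v (transGen_of_mul_ne_zero h)

end WSupport

namespace wdetour

variable {R V : Type*} [CommSemiring R] [DecidableEq V] (μ : V → V → R)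

theorem apply_eq_zero {v x y : V} (h : x = v ∨ y = v ∨ x = y) : wdetour μ v x y = 0 :=
  if_pos h

theorem apply_of_ne {v x y : V} (hxv : x ≠ v) (hyv : y ≠ v) (hxy : x ≠ y) :
    wdetour μ v x y = μ x y + μ x v * μ v y :=
  if_neg (by simp [hxv, hyv, hxy])

theorem wdetour_apply_eq_zero {v w x y : V} (h : x = v ∨ y = v ∨ x = w ∨ y = w ∨ x = y) :
    wdetour (wdetour μ v) w x y = 0 := by
  by_cases hw : x = w ∨ y = w ∨ x = y
  · exact apply_eq_zero _ hw
  · obtain rfl | rfl : x = v ∨ y = v := by tauto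
    all_goals simp [wdetour]

theorem wdetour_apply_of_ne {v w x y : V} (hvw : v ≠ w) (hxv : x ≠ v) (hyv : y ≠ v)
    (hxw : x ≠ w) (hyw : y ≠ w) (hxy : x ≠ y) :
    wdetour (wdetour μ v) w x y =
      μ x y + μ x v * μ v y + μ x w * μ w y + μ x v * μ v w * μ w y + μ x w * μ w v * μ v y +
        μ x v * (μ v w * μ w v) * μ v y := by
  rw [apply_of_ne _ hxw hyw hxy, apply_of_ne μ hxv hyv hxy, apply_of_ne μ hxv hvw.symm hxw,
    apply_of_ne μ hvw.symm hyv hyw.symm]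
  ring

theorem comm_of_mul_swap_eq_zero {v w : V} (h : μ v w * μ w v = 0) :
    wdetour (wdetour μ v) w = wdetour (wdetour μ w) v := by
  obtain rfl | hvw := eq_or_ne v w
  · rfl
  ext x y
  by_cases hdeg : x = v ∨ y = v ∨ x = w ∨ y = w ∨ x = y
  · rw [wdetour_apply_eq_zero μ hdeg, wdetour_apply_eq_zero μ (by tauto)]
  · obtain ⟨hxv, hyv, hxw, hyw, hxy⟩ : x ≠ v ∧ y ≠ v ∧ x ≠ w ∧ y ≠ w ∧ x ≠ y := by tauto
    rw [wdetour_apply_of_ne μ hvw hxv hyv hxw hyw hxy,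
      wdetour_apply_of_ne μ hvw.symm hxw hyw hxv hyv hxy, mul_comm (μ w v) (μ v w), h]
    ring

theorem wsupport_le_transGen (v : V) : WSupport (wdetour μ v) ≤ TransGen (WSupport μ) := by
  intro x y h
  have hne : ¬(x = v ∨ y = v ∨ x = y) := mt (apply_eq_zero μ) h
  have hsum : μ x y + μ x v * μ v y ≠ 0 := by rwa [WSupport, wdetour, if_neg hne] at h
  by_cases hxy : μ x y = 0
  · rw [hxy, zero_add] at hsum
    exact WSupport.transGen_of_mul_ne_zero hsum
  · exact .single hxy

variable {μ}

theorem irrefl_transGen_wsupport (hμ : Std.Irrefl (TransGen (WSupport μ))) (v : V) :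
    Std.Irrefl (TransGen (WSupport (wdetour μ v))) where
  irrefl x hx := hμ.irrefl x (TransGen.closed (wsupport_le_transGen μ v) x x hx)

end wdetour

/-- If the support digraph of `μ` (with `x → y` iff `μ x y ≠ 0`) is acyclic, then
detours commute pairwise and every detour again has acyclic support digraph. -/
theorem wdetour_acyclic {R V : Type*} [CommSemiring R] [DecidableEq V]
    (μ : V → V → R) (hdiag : ∀ x, μ x x = 0)
    (hacyc : Irreflexive (Relation.TransGen (fun x y => μ x y ≠ 0))) :
    (∀ v w : V, v ≠ w → wdetour (wdetour μ v) w = wdetour (wdetour μ w) v) ∧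
      ∀ v : V, Irreflexive (Relation.TransGen (fun x y => wdetour μ v x y ≠ 0)) := by
  have hμ : Std.Irrefl (TransGen (WSupport μ)) := ⟨hacyc⟩
  exact ⟨fun v w _ => wdetour.comm_of_mul_swap_eq_zero μ (WSupport.mul_swap_eq_zero hμ v w),
    fun v => (wdetour.irrefl_transGen_wsupport hμ v).irrefl⟩
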